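/- Let 0 < d < n be integers and let E ⊆ ℝ^n be a LARRF set of dimension d with constants ε and C₀, where ε is small enough depending only on n and d. Then for every x ∈ E and 0 < r ≤ 10⁻² there is an (n−d)-dimensional affine plane W through x such that the sphere S = W ∩ ∂B(x,r/2) satisfies dist(z,E) ≥ r/3 for every z ∈ S, and S is linked with E in the following sense: there is no continuous map F : [0,1] × ℝ^n → ℝ^n such that F(t,z) = z whenever t = 0 or z ∈ ℝ^n ∖ B(x,10r), F(1,z) ∈ ℝ^n ∖ B(x,10r) for every z ∈ E, and F(t,z) ∈ ℝ^n ∖ S for every z ∈ E and every t ∈ [0,1]. (Lemma 15.6: LARRF sets are local generalized Semmes surfaces.) -/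

import Mathlib

open Metric Set MeasureTheory
open scoped ENNReal

noncomputable section

set_option synthInstance.maxHeartbeats 1000000
set_option maxHeartbeats 1000000

/-- `ℝⁿ`. -/
abbrev V (n : ℕ) := EuclideanSpace ℝ (Fin n)

/-- `P` is a `d`-dimensional affine plane of `ℝⁿ`. -/
def IsAffinePlane (n d : ℕ) (P : Set (V n)) : Prop :=
  ∃ Q : AffineSubspace ℝ (V n), (Q : Set (V n)) = P ∧
    Module.finrank ℝ Q.direction = d ∧ (Q : Set (V n)).Nonempty

/-- The normalized local Hausdorff distance `d_{x,r}(A,B)`. -/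
def nhd {n : ℕ} (x : V n) (r : ℝ) (A B : Set (V n)) : ℝ :=
  r⁻¹ * max (⨆ y ∈ A ∩ ball x r, infDist y B) (⨆ y ∈ B ∩ ball x r, infDist y A)

/-- `E` is a locally Ahlfors-regular Reifenberg-flat (LARRF) set of dimension `d`
with constants `ε` and `C₀` (Definition 15.1). -/
def IsLARRF (n d : ℕ) (ε C₀ : ℝ) (E : Set (V n)) : Prop :=
  E.Nonempty ∧ IsClosed E ∧
  ∀ x ∈ E, ∀ r : ℝ, 0 < r → r ≤ 1 →
    (∃ P : Set (V n), IsAffinePlane n d P ∧ x ∈ P ∧ nhd x r P E ≤ ε) ∧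
    ENNReal.ofReal (C₀⁻¹ * r ^ d) ≤ μH[(d : ℝ)] (E ∩ ball x r) ∧
    μH[(d : ℝ)] (E ∩ ball x r) ≤ ENNReal.ofReal (C₀ * r ^ d)

/-!
Let `x + K` be the plane given by flatness at `x` and scale `20 * r`, and let `W = x + Kᗮ`. Points
of `W` at distance `r / 2` from `x` are far from the plane, hence far from `E`. A disk of the plane
lies close to `E`. Averaging nearby points of `E` with a partition of unity, and using flatness at
ever smaller scales, moves the disk to a continuous image `g` as close to `E` as desired while
displacing it by at most `r / 50`. By compactness, a homotopy that unlinks `E` from the sphere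
`S = W ∩ ∂B(x, r / 2)` also moves `g` off `S` at all times and off `B(x, r / 2)` at time `1`.

Write `u = a + b` with `a ∈ K` and `b ∈ Kᗮ`, let `τ` be a cutoff equal to `1` for `‖b‖ ≤ r / 2` and
to `0` for `‖b‖ ≥ r`, and let `c b` be the radial retraction of `b` onto the ball of radius `r / 2`.
The map `f u = F (τ u, g u) - x + c b` satisfies `⟪f u, u⟫ > 0` on a large sphere, so it has a zero;
there `F (τ u, g u) = x - c b`, which lies on `S` if `‖b‖ ≥ r / 2`, and in `B(x, r / 2)` at time
`τ u = 1` otherwise. Both are excluded for an unlinking homotopy.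

The existence of zeros is Brouwer's theorem, proved by the Milnor–Rogers volume argument: for a
`C¹` map `u` equal to the identity on a sphere, the integral of `det (1 + t • D(u - id))` over the
ball is a polynomial in `t` equal to the volume of the ball for small `t`, whereas it vanishes at
`t = 1` if `‖u‖` is constant.
-/

section RadialClip

variable {H : Type*} [NormedAddCommGroup H]

/-- The radial retraction of a normed space onto the closed ball of radius `ρ` about `0`. -/
def radialClip [NormedSpace ℝ H] (ρ : ℝ) (z : H) : H :=
  (ρ / max ρ ‖z‖) • z

section Normed

variable [NormedSpace ℝ H] {ρ : ℝ} {z : H}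

theorem radialClip_of_norm_le (hρ : 0 < ρ) (hz : ‖z‖ ≤ ρ) : radialClip ρ z = z := by
  rw [radialClip, max_eq_left hz, div_self hρ.ne', one_smul]

theorem norm_radialClip (hρ : 0 < ρ) (z : H) : ‖radialClip ρ z‖ = min ρ ‖z‖ := by
  have hmax : 0 < max ρ ‖z‖ := lt_max_of_lt_left hρ
  rw [radialClip, norm_smul, Real.norm_of_nonneg (by positivity), div_mul_eq_mul_div,
    ← min_mul_max ρ ‖z‖, mul_div_cancel_right₀ _ hmax.ne']

theorem norm_radialClip_le (hρ : 0 < ρ) : ‖radialClip ρ z‖ ≤ ρ :=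
  (norm_radialClip hρ z).trans_le (min_le_left _ _)

theorem norm_radialClip_of_le_norm (hρ : 0 < ρ) (hz : ρ ≤ ‖z‖) : ‖radialClip ρ z‖ = ρ := by
  rw [norm_radialClip hρ, min_eq_left hz]

theorem lipschitzWith_radialClip (hρ : 0 < ρ) : LipschitzWith 2 (radialClip ρ : H → H) := by
  refine LipschitzWith.of_dist_le_mul fun z w => ?_
  set a := max ρ ‖z‖
  set b := max ρ ‖w‖
  have ha : 0 < a := lt_max_of_lt_left hρ
  have hb : 0 < b := lt_max_of_lt_left hρ
  have hdecomp : radialClip ρ z - radialClip ρ w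
      = (ρ / a) • ((z - w) + ((b - a) / b) • w) := by
    rw [radialClip, radialClip, sub_div, div_self hb.ne', sub_smul, one_smul, sub_add_sub_cancel,
      smul_sub, smul_smul, div_mul_div_cancel₀ ha.ne']
  have hba : |b - a| ≤ ‖z - w‖ := by
    refine (abs_max_sub_max_le_max ρ ‖w‖ ρ ‖z‖).trans ?_
    rw [sub_self, abs_zero, max_eq_right (abs_nonneg _), abs_sub_comm]
    exact abs_norm_sub_norm_le z w
  have hw : ‖((b - a) / b) • w‖ ≤ ‖z - w‖ := by
    rw [norm_smul, norm_div, Real.norm_of_nonneg hb.le, div_mul_eq_mul_div]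
    exact div_le_of_le_mul₀ hb.le (norm_nonneg _)
      (mul_le_mul hba (le_max_right _ _) (norm_nonneg _) (norm_nonneg _))
  rw [dist_eq_norm, dist_eq_norm, hdecomp, norm_smul, Real.norm_of_nonneg (by positivity)]
  calc ρ / a * ‖(z - w) + ((b - a) / b) • w‖
      ≤ 1 * (‖z - w‖ + ‖z - w‖) := by
        gcongr
        · exact (div_le_one ha).2 (le_max_left _ _)
        · exact (norm_add_le _ _).trans (by gcongr)
    _ = (2 : NNReal) * ‖z - w‖ := by push_cast; ring

theorem continuous_radialClip (hρ : 0 < ρ) : Continuous (radialClip ρ : H → H) :=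
  (lipschitzWith_radialClip hρ).continuous

theorem lipschitzWith_comp_radialClip {X : Type*} [PseudoEMetricSpace X] {h : H → X}
    {K : NNReal} (hρ : 0 < ρ) (hh : LipschitzOnWith K h (closedBall 0 ρ)) :
    LipschitzWith (K * 2) fun x => h (radialClip ρ x) := by
  have hmaps : MapsTo (radialClip ρ : H → H) univ (closedBall 0 ρ) :=
    fun _ _ => mem_closedBall_zero_iff.2 (norm_radialClip_le hρ)
  exact lipschitzOnWith_univ.1
    (hh.comp (lipschitzWith_radialClip hρ).lipschitzOnWith hmaps)

end Normed

theorem inner_radialClip_self [InnerProductSpace ℝ H] {ρ : ℝ} (hρ : 0 < ρ) (z : H) :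
    inner ℝ (radialClip ρ z) z = min ρ ‖z‖ * ‖z‖ := by
  have hmax : max ρ ‖z‖ ≠ 0 := (lt_max_of_lt_left hρ).ne'
  rw [radialClip, real_inner_smul_left, real_inner_self_eq_norm_sq]
  field_simp
  linear_combination (-‖z‖) * min_mul_max ρ ‖z‖

end RadialClip

section DegreeOne

open Polynomial

theorem exists_polynomial_eval_eq_det_one_add_smul {R M : Type*} [CommRing R] [Nontrivial R]
    [AddCommGroup M] [Module R M] [Module.Free R M] [Module.Finite R M] (A : M →ₗ[R] M) :
    ∃ p : R[X], p.natDegree ≤ Module.finrank R M ∧ ∀ t, p.eval t = LinearMap.det (1 + t • A) := by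
  let b := Module.finBasis R M
  refine ⟨((X : R[X]) • (LinearMap.toMatrix b b A).map C + (1 : Matrix _ _ R).map C).det, ?_,
    fun t => ?_⟩
  · simpa using natDegree_det_X_add_C_le (LinearMap.toMatrix b b A) 1
  · rw [← LinearMap.det_toMatrix b, ← coe_evalRingHom, RingHom.map_det]
    congr 1
    ext i j
    rcases eq_or_ne i j with rfl | hij
    · simp [LinearMap.toMatrix_one, add_comm, mul_comm t]
    · simp [LinearMap.toMatrix_one, Matrix.one_apply_ne hij, mul_comm t]

theorem exists_polynomial_eval_eq_integral {α : Type*} [MeasurableSpace α] {μ : Measure α}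
    {p : α → ℝ[X]} {N : ℕ} (hdeg : ∀ x, (p x).natDegree ≤ N)
    (hint : ∀ t, Integrable (fun x => (p x).eval t) μ) :
    ∃ q : ℝ[X], ∀ t, q.eval t = ∫ x, (p x).eval t ∂μ := by
  let nodes := Finset.range (N + 1)
  have hinj : InjOn (Nat.cast : ℕ → ℝ) nodes := Nat.cast_injective.injOn
  have hp : ∀ x t, (p x).eval t
      = ∑ i ∈ nodes, (p x).eval (i : ℝ) * (Lagrange.basis nodes Nat.cast i).eval t := by
    intro x t
    have hlt : (p x).degree < nodes.card := by
      rw [Finset.card_range]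
      exact degree_le_natDegree.trans_lt (by exact_mod_cast Nat.lt_succ_of_le (hdeg x))
    conv_lhs => rw [Lagrange.eq_interpolate hinj hlt]
    simp only [Lagrange.interpolate_apply, eval_finsetSum, eval_mul, eval_C]
  refine ⟨Lagrange.interpolate nodes Nat.cast fun i => ∫ x, (p x).eval (i : ℝ) ∂μ, fun t => ?_⟩
  simp_rw [hp _ t]
  rw [integral_finsetSum _ fun (i : ℕ) _ => (hint i).mul_const _]
  simp only [Lagrange.interpolate_apply, eval_finsetSum, eval_mul, eval_C, integral_mul_const]

section Normed

variable {H : Type*} [NormedAddCommGroup H] [NormedSpace ℝ H]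

theorem det_one_add_pos_of_norm_lt_one [CompleteSpace H] {A : H →L[ℝ] H} (hA : ‖A‖ < 1) :
    0 < (1 + A).det := by
  by_contra! hdet
  have hcont : Continuous fun s : ℝ => (1 + s • A).det :=
    ContinuousLinearMap.continuous_det.comp (by fun_prop)
  obtain ⟨s, ⟨hs0, hs1⟩, hs⟩ := intermediate_value_Icc' zero_le_one hcont.continuousOn
    (show (0 : ℝ) ∈ Icc _ _ from
      ⟨by simpa only [one_smul] using hdet, by simp [ContinuousLinearMap.det]⟩)
  have hsA : ‖-(s • A)‖ < 1 := by
    rw [norm_neg, norm_smul, Real.norm_of_nonneg hs0]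
    exact (mul_le_of_le_one_left (norm_nonneg _) hs1).trans_lt hA
  have hunit : IsUnit (1 + s • A) := by
    simpa only [sub_neg_eq_add] using isUnit_one_sub_of_norm_lt_one hsA
  have hunit' := hunit.map (ContinuousLinearMap.toLinearMapRingHom (R₁ := ℝ) (M₁ := H))
  exact (LinearMap.isUnit_det _ hunit').ne_zero hs

theorem bijective_id_add_of_lipschitzWith [CompleteSpace H] {g : H → H} {c : NNReal}
    (hg : LipschitzWith c g) (hc : c < 1) : Function.Bijective fun x => x + g x := by
  have happ : ApproximatesLinearOn (fun x => x + g x)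
      (ContinuousLinearEquiv.refl ℝ H : H →L[ℝ] H) univ c := by
    intro x _ y _
    have hsub : x + g x - (y + g y) - (x - y) = g x - g y := by abel
    simpa [hsub] using hg.norm_sub_le x y
  have hc' : Subsingleton H ∨ c < ‖((ContinuousLinearEquiv.refl ℝ H).symm : H →L[ℝ] H)‖₊⁻¹ := by
    rcases subsingleton_or_nontrivial H with h | h
    · exact Or.inl h
    · right
      simpa using hc
  exact ⟨injOn_univ.1 (happ.injOn hc'), happ.surjective hc'⟩

variable [FiniteDimensional ℝ H] [MeasurableSpace H] [BorelSpace H] {μ : Measure H}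
  [μ.IsAddHaarMeasure]

theorem setIntegral_det_one_add_fderiv_of_lipschitzWith {g : H → H} {c : NNReal}
    (hg : LipschitzWith c g) (hc : c < 1) {s : Set H} (hs : MeasurableSet s)
    (hgs : ∀ x ∉ s, g x = 0) (hdiff : ∀ x ∈ s, DifferentiableAt ℝ g x) :
    ∫ x in s, (1 + fderiv ℝ g x).det ∂μ = μ.real s := by
  have hbij := bijective_id_add_of_lipschitzWith hg hc
  have himage : (fun x => x + g x) '' s = s := by
    rw [← compl_inj_iff, ← image_compl_eq hbij]
    exact (image_congr fun x hx => by simp only [hgs x hx, add_zero]).trans (image_id' _)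
  have hderiv : ∀ x ∈ s,
      HasFDerivWithinAt (fun x => x + g x) (1 + fderiv ℝ g x) s x := fun x hx =>
    ((hasFDerivAt_id x).add (hdiff x hx).hasFDerivAt).hasFDerivWithinAt
  have hvol := integral_image_eq_integral_abs_det_fderiv_smul μ hs hderiv hbij.injective.injOn
    fun _ => (1 : ℝ)
  simp only [himage, integral_const, smul_eq_mul, mul_one, measureReal_restrict_apply_univ] at hvol
  rw [hvol]
  refine setIntegral_congr_fun hs fun x _ => (abs_of_pos (det_one_add_pos_of_norm_lt_one ?_)).symm
  exact (norm_fderiv_le_of_lipschitz ℝ hg).trans_lt (by exact_mod_cast hc)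

theorem exists_forall_setIntegral_det_one_add_smul_fderiv {h : H → H} {ρ : ℝ} (hρ : 0 < ρ)
    (hh : ContDiff ℝ 1 h) (hsphere : ∀ x ∈ sphere 0 ρ, h x = 0) :
    ∃ δ > (0 : ℝ), ∀ t ∈ Ioo 0 δ,
      ∫ x in ball 0 ρ, (1 + t • fderiv ℝ h x).det ∂μ = μ.real (ball 0 ρ) := by
  obtain ⟨K, hK⟩ := (hh.locallyLipschitz.locallyLipschitzOn
    (s := closedBall 0 ρ)).exists_lipschitzOnWith_of_compact (isCompact_closedBall 0 ρ)
  refine ⟨((K * 2 : NNReal) + 1 : ℝ)⁻¹, by positivity, fun t ⟨ht0, htδ⟩ => ?_⟩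
  lift t to NNReal using ht0.le
  have hc : t * (K * 2) < 1 := by
    rw [lt_inv_comm₀ ht0 (by positivity), ← one_div, lt_div_iff₀ ht0] at htδ
    exact_mod_cast (by push_cast at htδ ⊢; linarith : ((t * (K * 2) : NNReal) : ℝ) < 1)
  have hlip : LipschitzWith (t * (K * 2)) fun x => (t : ℝ) • h (radialClip ρ x) := by
    simpa only [NNReal.nnnorm_eq, Function.comp_def] using
      (lipschitzWith_smul (t : ℝ)).comp (lipschitzWith_comp_radialClip hρ hK)
  have hderiv : ∀ x ∈ ball 0 ρ,
      HasFDerivAt (fun x => (t : ℝ) • h (radialClip ρ x)) ((t : ℝ) • fderiv ℝ h x) x := by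
    intro x hx
    refine ((hh.differentiable one_ne_zero x).hasFDerivAt.const_smul
      (t : ℝ)).congr_of_eventuallyEq ?_
    filter_upwards [isOpen_ball.mem_nhds hx] with y hy
    rw [radialClip_of_norm_le hρ (mem_ball_zero_iff.1 hy).le, Pi.smul_apply]
  rw [← setIntegral_det_one_add_fderiv_of_lipschitzWith (μ := μ) hlip hc measurableSet_ball
    ?_ fun x hx => (hderiv x hx).differentiableAt]
  · exact setIntegral_congr_fun measurableSet_ball fun x hx => by
      rw [(hderiv x hx).fderiv]
  · intro x hx
    have hx' : ρ ≤ ‖x‖ := by simpa using hx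
    simp [hsphere _ (mem_sphere_zero_iff_norm.2 (norm_radialClip_of_le_norm hρ hx'))]

theorem setIntegral_det_one_add_fderiv {h : H → H} {ρ : ℝ} (hρ : 0 < ρ)
    (hh : ContDiff ℝ 1 h) (hsphere : ∀ x ∈ sphere 0 ρ, h x = 0) :
    ∫ x in ball 0 ρ, (1 + fderiv ℝ h x).det ∂μ = μ.real (ball 0 ρ) := by
  choose p hdeg hp using fun x =>
    exists_polynomial_eval_eq_det_one_add_smul (fderiv ℝ h x : H →ₗ[ℝ] H)
  have hp' : ∀ x t, (1 + t • fderiv ℝ h x).det = (p x).eval t := fun x t => (hp x t).symm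
  obtain ⟨δ, hδ, hsmall⟩ := exists_forall_setIntegral_det_one_add_smul_fderiv (μ := μ) hρ hh hsphere
  simp only [hp'] at hsmall
  have hint : ∀ t, IntegrableOn (fun x => (p x).eval t) (ball 0 ρ) μ := by
    intro t
    have hcont : Continuous fun x => (p x).eval t := by
      simp only [← hp']
      exact ContinuousLinearMap.continuous_det.comp
        (continuous_const.add ((hh.continuous_fderiv one_ne_zero).const_smul t))
    exact (hcont.continuousOn.integrableOn_compact (isCompact_closedBall 0 ρ)).mono_set
      ball_subset_closedBall
  obtain ⟨q, hq⟩ := exists_polynomial_eval_eq_integral hdeg hint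
  have hqconst : q = C (μ.real (ball 0 ρ)) :=
    eq_of_infinite_eval_eq _ _ ((Ioo_infinite hδ).mono fun t ht => by
      simp only [mem_ofPred_eq, eval_C, hq, hsmall t ht])
  simpa only [hqconst, eval_C, ← hp', one_smul] using (hq 1).symm

end Normed

variable {H : Type*} [NormedAddCommGroup H] [InnerProductSpace ℝ H] [FiniteDimensional ℝ H]

theorem det_fderiv_eq_zero_of_norm_const {u : H → H} {ρ : ℝ} (hρ : ρ ≠ 0) (hu : ∀ x, ‖u x‖ = ρ)
    {x : H} (hdiff : DifferentiableAt ℝ u x) : (fderiv ℝ u x).det = 0 := by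
  by_contra hdet
  obtain ⟨v, hv⟩ : ∃ v, fderiv ℝ u x v = u x :=
    (LinearMap.equivOfDetNeZero (fderiv ℝ u x : H →ₗ[ℝ] H) hdet).surjective (u x)
  have hconst : (fun y => inner ℝ (u y) (u y)) = fun _ => ρ ^ 2 := by
    funext y
    rw [real_inner_self_eq_norm_sq, hu]
  have hderiv := hdiff.hasFDerivAt.inner ℝ hdiff.hasFDerivAt
  rw [hconst] at hderiv
  have hzero := DFunLike.congr_fun (hderiv.unique (hasFDerivAt_const _ _)) v
  have hsum : ρ ^ 2 + ρ ^ 2 = 0 := by simpa [hv, hu] using hzero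
  exact hρ (pow_eq_zero_iff two_ne_zero |>.1 (by linarith))

theorem exists_mem_sphere_ne_self_of_norm_const {u : H → H} {ρ : ℝ} (hρ : 0 < ρ)
    (hu : ContDiff ℝ 1 u) (hnorm : ∀ x, ‖u x‖ = ρ) : ∃ x ∈ sphere 0 ρ, u x ≠ x := by
  borelize H
  by_contra! hfix
  have hint := setIntegral_det_one_add_fderiv (μ := volume) (h := fun x => u x - x) hρ
    (hu.sub contDiff_id) fun x hx => sub_eq_zero.2 (hfix x hx)
  have hdet : ∀ x, (1 + fderiv ℝ (fun x => u x - x) x).det = 0 := by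
    intro x
    have hdiff : DifferentiableAt ℝ u x := hu.differentiable one_ne_zero x
    have hfderiv : fderiv ℝ (fun x => u x - x) x = fderiv ℝ u x - 1 :=
      (hdiff.hasFDerivAt.sub (hasFDerivAt_id x)).fderiv
    rw [hfderiv, add_sub_cancel]
    exact det_fderiv_eq_zero_of_norm_const hρ.ne' hnorm hdiff
  have hpos : 0 < volume.real (ball (0 : H) ρ) :=
    ENNReal.toReal_pos (measure_ball_pos volume _ hρ).ne' measure_ball_lt_top.ne
  refine hpos.ne ?_
  simpa only [hdet, integral_zero] using hint

theorem exists_eq_zero_of_eq_self_off_ball {f : H → H} {ρ : ℝ} (hρ : 0 < ρ)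
    (hf : Continuous f) (hfρ : ∀ x, ρ ≤ ‖x‖ → f x = x) : ∃ x, f x = 0 := by
  by_contra! hne
  obtain ⟨ψ, hψ, hψf, hψsupp⟩ := Continuous.exists_contDiff_approx 1
    (f := fun x => x - f x) (ε := fun x => ‖f x‖) (by fun_prop) (by fun_prop)
    fun x => norm_pos_iff.2 (hne x)
  have hψne : ∀ x, x - ψ x ≠ 0 := by
    intro x hx
    have hdist := hψf x
    rw [← sub_eq_zero.1 hx, dist_eq_norm, sub_sub_cancel] at hdist
    exact lt_irrefl _ hdist
  have hψρ : ∀ x, ρ ≤ ‖x‖ → ψ x = 0 := fun x hx =>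
    Function.notMem_support.1 fun hsupp => hψsupp hsupp (sub_eq_zero.2 (hfρ x hx).symm)
  have hψ' : ContDiff ℝ 1 fun x => x - ψ x := contDiff_id.sub hψ
  obtain ⟨x, hx, hux⟩ := exists_mem_sphere_ne_self_of_norm_const
    (u := fun x => (ρ * ‖x - ψ x‖⁻¹) • (x - ψ x)) hρ
    ((contDiff_const.mul
      ((hψ'.norm ℝ hψne).inv fun x => norm_ne_zero_iff.2 (hψne x))).smul hψ')
    fun x => by
      rw [norm_smul, norm_mul, norm_inv, norm_norm, Real.norm_of_nonneg hρ.le,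
        inv_mul_cancel_right₀ (norm_ne_zero_iff.2 (hψne x))]
  rw [mem_sphere_zero_iff_norm] at hx
  refine hux ?_
  simp only [hψρ x hx.ge, sub_zero, hx, mul_inv_cancel₀ hρ.ne', one_smul]

theorem exists_mem_closedBall_eq_zero_of_inner_nonneg {f : H → H} {R : ℝ} (hR : 0 < R)
    (hf : ContinuousOn f (closedBall 0 R)) (hinner : ∀ x ∈ sphere 0 R, 0 ≤ inner ℝ (f x) x) :
    ∃ x ∈ closedBall 0 R, f x = 0 := by
  let χ : H → ℝ := fun x => Real.smoothTransition (R + 1 - ‖x‖)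
  have hclip : Continuous fun x => f (radialClip R x) :=
    hf.comp_continuous (continuous_radialClip hR)
      fun x => mem_closedBall_zero_iff.2 (norm_radialClip_le hR)
  have hχ : Continuous χ := Real.smoothTransition.continuous.comp (by fun_prop)
  obtain ⟨x, hx⟩ := exists_eq_zero_of_eq_self_off_ball (ρ := R + 1) (by linarith)
    (f := fun x => χ x • f (radialClip R x) + (1 - χ x) • x)
    ((hχ.smul hclip).add ((continuous_const.sub hχ).smul continuous_id)) fun x hx => by
      have hχx : χ x = 0 := Real.smoothTransition.zero_of_nonpos (by linarith)
      simp only [hχx, zero_smul, sub_zero, one_smul, zero_add]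
  rcases le_or_gt ‖x‖ R with hxR | hRx
  · have hχx : χ x = 1 := Real.smoothTransition.one_of_one_le (by linarith)
    rw [hχx, sub_self, zero_smul, add_zero, one_smul, radialClip_of_norm_le hR hxR] at hx
    exact ⟨x, mem_closedBall_zero_iff.2 hxR, hx⟩
  · have hχ0 : 0 ≤ χ x := Real.smoothTransition.nonneg _
    have hχ1 : χ x < 1 := Real.smoothTransition.lt_one_of_lt_one (by linarith)
    have hclipx : 0 ≤ R / max R ‖x‖ * inner ℝ (f (radialClip R x)) x := by
      rw [← real_inner_smul_right]
      exact hinner _ (mem_sphere_zero_iff_norm.2 (norm_radialClip_of_le_norm hR hRx.le))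
    have hfx : 0 ≤ inner ℝ (f (radialClip R x)) x :=
      nonneg_of_mul_nonneg_right hclipx (by positivity)
    have hsum := congrArg (fun y => inner ℝ y x) hx
    simp only [inner_add_left, real_inner_smul_left, real_inner_self_eq_norm_sq,
      inner_zero_left] at hsum
    have hpos : 0 < (1 - χ x) * ‖x‖ ^ 2 :=
      mul_pos (sub_pos.2 hχ1) (pow_pos (hR.trans hRx) 2)
    linarith [mul_nonneg hχ0 hfx]

end DegreeOne

section Flatness

section Normed

variable {H : Type*} [NormedAddCommGroup H] [NormedSpace ℝ H]

/-- Two-sided Reifenberg flatness: at every point of `E` and every scale `r ≤ 1`, the set `E` and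
some `d`-plane through the point are `ε * r`-close to each other inside the ball of radius `r`. -/
def IsReifenbergFlat (d : ℕ) (ε : ℝ) (E : Set H) : Prop :=
  ∀ x ∈ E, ∀ r : ℝ, 0 < r → r ≤ 1 → ∃ Q : AffineSubspace ℝ H,
    Module.finrank ℝ Q.direction = d ∧ x ∈ Q ∧
    (∀ y ∈ Q, dist y x < r → infDist y E ≤ ε * r) ∧
    ∀ y ∈ E, dist y x < r → infDist y (Q : Set H) ≤ ε * r

variable {d : ℕ} {ε s : ℝ} {E : Set H}

theorem IsReifenbergFlat.convexHull_subset_thickening (hE : IsReifenbergFlat d ε E)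
    (hε : ε ≤ 1 / 100) (hs : 0 < s) (hs' : s ≤ 1 / 5) (z : H) :
    convexHull ℝ (E ∩ ball z (2 * s)) ⊆ thickening (s / 2) E := by
  intro c hc
  obtain ⟨e, heE, hez⟩ := convexHull_nonempty_iff.1 ⟨c, hc⟩
  obtain ⟨Q, -, heQ, hQE, hEQ⟩ := hE e heE (5 * s) (by linarith) (by linarith)
  have hεs : ε * (5 * s) ≤ s / 20 := by nlinarith
  have hsub : E ∩ ball z (2 * s) ⊆ thickening (s / 10) (Q : Set H) ∩ ball e (4 * s) := by
    rintro y ⟨hyE, hyz⟩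
    have hye : dist y e < 4 * s := by
      linarith [dist_triangle_right y e z, mem_ball.1 hyz, mem_ball.1 hez]
    refine ⟨(mem_thickening_iff_infDist_lt ⟨e, heQ⟩).2 ?_, hye⟩
    linarith [hEQ y hyE (by linarith)]
  obtain ⟨hcQ, hce⟩ := convexHull_min hsub ((Q.convex.thickening _).inter (convex_ball _ _)) hc
  obtain ⟨q, hqQ, hcq⟩ := mem_thickening_iff.1 hcQ
  have hqe : dist q e < 5 * s := by linarith [dist_triangle_left q e c, mem_ball.1 hce]
  refine (mem_thickening_iff_infDist_lt ⟨e, heE⟩).2 ?_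
  calc infDist c E ≤ infDist q E + dist c q := infDist_le_infDist_add_dist
    _ < s / 2 := by linarith [hQE q hqQ hqe]

variable {X : Type*} [TopologicalSpace X] [NormalSpace X] [ParacompactSpace X]

theorem IsReifenbergFlat.exists_continuousMap_thickening_half (hE : IsReifenbergFlat d ε E)
    (hε : ε ≤ 1 / 100) (hs : 0 < s) (hs' : s ≤ 1 / 5) (g : C(X, H))
    (hg : ∀ y, g y ∈ thickening s E) :
    ∃ g' : C(X, H), ∀ y, dist (g' y) (g y) ≤ 2 * s ∧ g' y ∈ thickening (s / 2) E := by
  have hlocal : ∀ y, ∃ c, ∀ᶠ w in nhds y, c ∈ convexHull ℝ (E ∩ ball (g w) (2 * s)) := by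
    intro y
    obtain ⟨c, hcE, hc⟩ := mem_thickening_iff.1 (hg y)
    refine ⟨c, ?_⟩
    filter_upwards [g.continuous.continuousAt.eventually (ball_mem_nhds (g y) hs)] with w hw
    refine subset_convexHull ℝ _ ⟨hcE, ?_⟩
    rw [mem_ball]
    linarith [dist_triangle_left c (g w) (g y), dist_comm c (g y), dist_comm (g w) (g y)]
  obtain ⟨g', hg'⟩ := exists_continuous_forall_mem_convex_of_local_const
    (fun y => convex_convexHull ℝ (E ∩ ball (g y) (2 * s))) hlocal
  refine ⟨g', fun y => ⟨?_, hE.convexHull_subset_thickening hε hs hs' (g y) (hg' y)⟩⟩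
  exact (mem_ball.1 (convexHull_min inter_subset_right (convex_ball _ _) (hg' y))).le

theorem IsReifenbergFlat.exists_continuousMap_thickening_div_two_pow
    (hE : IsReifenbergFlat d ε E) (hε : ε ≤ 1 / 100) (hs : 0 < s) (hs' : s ≤ 1 / 5) (g : C(X, H))
    (hg : ∀ y, g y ∈ thickening s E) (k : ℕ) :
    ∃ g' : C(X, H), ∀ y, dist (g' y) (g y) ≤ 4 * s ∧ g' y ∈ thickening (s / 2 ^ k) E := by
  induction k generalizing s g with
  | zero => exact ⟨g, fun y => ⟨by rw [dist_self]; linarith, by simpa using hg y⟩⟩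
  | succ k ih =>
    obtain ⟨g₁, hg₁⟩ := hE.exists_continuousMap_thickening_half hε hs hs' g hg
    obtain ⟨g₂, hg₂⟩ := ih (half_pos hs) (by linarith) g₁ fun y => (hg₁ y).2
    refine ⟨g₂, fun y => ⟨?_, ?_⟩⟩
    · linarith [dist_triangle (g₂ y) (g₁ y) (g y), (hg₁ y).1, (hg₂ y).1]
    · rw [pow_succ', ← div_div]
      exact (hg₂ y).2

theorem IsReifenbergFlat.exists_continuousMap_thickening (hE : IsReifenbergFlat d ε E)
    (hε : ε ≤ 1 / 100) (hs : 0 < s) (hs' : s ≤ 1 / 5) (g : C(X, H))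
    (hg : ∀ y, g y ∈ thickening s E) {δ : ℝ} (hδ : 0 < δ) :
    ∃ g' : C(X, H), ∀ y, dist (g' y) (g y) ≤ 4 * s ∧ g' y ∈ thickening δ E := by
  obtain ⟨k, hk⟩ := pow_unbounded_of_one_lt (s / δ) one_lt_two
  obtain ⟨g', hg'⟩ := hE.exists_continuousMap_thickening_div_two_pow hε hs hs' g hg k
  have hkδ : s / 2 ^ k ≤ δ := ((div_lt_comm₀ hδ (by positivity)).1 hk).le
  exact ⟨g', fun y => ⟨(hg' y).1, thickening_mono hkδ E (hg' y).2⟩⟩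

end Normed

theorem infDist_le_of_nhd_le {n : ℕ} {ε r : ℝ} {x y : V n} {A B : Set (V n)} (hr : 0 < r)
    (hB : x ∈ B) (hy : y ∈ A) (hyx : dist y x < r)
    (h : r⁻¹ * (⨆ y ∈ A ∩ ball x r, infDist y B) ≤ ε) : infDist y B ≤ ε * r := by
  have hbdd : BddAbove (range fun y => ⨆ _ : y ∈ A ∩ ball x r, infDist y B) := by
    refine ⟨r, forall_mem_range.2 fun z => Real.iSup_le (fun hz => ?_) hr.le⟩
    exact (infDist_le_dist_of_mem hB).trans (mem_ball.1 hz.2).le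
  have hmem : y ∈ A ∩ ball x r := ⟨hy, hyx⟩
  calc infDist y B = ⨆ _ : y ∈ A ∩ ball x r, infDist y B := by rw [ciSup_pos hmem]
    _ ≤ ⨆ y ∈ A ∩ ball x r, infDist y B := le_ciSup hbdd y
    _ ≤ ε * r := by rwa [inv_mul_le_iff₀ hr, mul_comm] at h

theorem IsLARRF.isReifenbergFlat {n d : ℕ} {ε C₀ : ℝ} {E : Set (V n)} (hE : IsLARRF n d ε C₀ E) :
    IsReifenbergFlat d ε E := by
  intro x hx r hr hr1
  obtain ⟨⟨_, ⟨Q, rfl, hQd, -⟩, hxQ, hnhd⟩, -⟩ := hE.2.2 x hx r hr hr1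
  rw [nhd, mul_max_of_nonneg _ _ (inv_pos.2 hr).le, max_le_iff] at hnhd
  exact ⟨Q, hQd, hxQ, fun y hy hyx => infDist_le_of_nhd_le hr hx hy hyx hnhd.1,
    fun y hy hyx => infDist_le_of_nhd_le hr hxQ hy hyx hnhd.2⟩

end Flatness

section Linking

theorem exists_pos_forall_mem_thickening_notMem {Y Z M : Type*} [TopologicalSpace Y] [T2Space Y]
    [MetricSpace M] [TopologicalSpace Z] {F : Y × M → Z} {A : Set Y} {C E : Set M} {T : Set Z}
    (hA : IsCompact A) (hC : IsCompact C) (hF : ContinuousOn F (A ×ˢ C)) (hT : IsClosed T)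
    (hE : IsClosed E) (h : ∀ z ∈ E, ∀ t ∈ A, F (t, z) ∉ T) :
    ∃ δ > 0, ∀ z ∈ C, z ∈ thickening δ E → ∀ t ∈ A, F (t, z) ∉ T := by
  have hAC : IsCompact (A ×ˢ C) := hA.prod hC
  have hbad : IsCompact (Prod.snd '' (A ×ˢ C ∩ F ⁻¹' T)) :=
    (hAC.of_isClosed_subset (hF.preimage_isClosed_of_isClosed hAC.isClosed hT)
      inter_subset_left).image continuous_snd
  have hdisj : Disjoint (Prod.snd '' (A ×ˢ C ∩ F ⁻¹' T)) E := by
    rw [disjoint_left]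
    rintro _ ⟨⟨t, z⟩, ⟨⟨ht, -⟩, hzT⟩, rfl⟩ hz
    exact h z hz t ht hzT
  obtain ⟨δ, hδ, hδdisj⟩ := hdisj.exists_thickenings hbad hE
  refine ⟨δ, hδ, fun z hz hzE t ht hzT => disjoint_left.1 hδdisj ?_ hzE⟩
  exact self_subset_thickening hδ _ ⟨(t, z), ⟨⟨ht, hz⟩, hzT⟩, rfl⟩

/-- `F` is a homotopy of the ambient space, starting from the identity and supported in `U`, that
pushes `E` out of `U` without meeting `S`. The sets `E` and `S` are linked in `U` when there is no
such `F`. -/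
structure IsUnlinking {H : Type*} [TopologicalSpace H] (U E S : Set H) (F : ℝ × H → H) :
    Prop where
  continuousOn : ContinuousOn F (Icc (0 : ℝ) 1 ×ˢ univ)
  map_zero : ∀ z, F (0, z) = z
  map_of_notMem : ∀ t ∈ Icc (0 : ℝ) 1, ∀ z, z ∉ U → F (t, z) = z
  map_one_notMem : ∀ z ∈ E, F (1, z) ∉ U
  map_notMem : ∀ z ∈ E, ∀ t ∈ Icc (0 : ℝ) 1, F (t, z) ∉ S

variable {H : Type*} [NormedAddCommGroup H] [InnerProductSpace ℝ H]

theorem norm_le_norm_add_of_inner_eq_zero {a b : H} (hab : inner ℝ a b = 0) :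
    ‖b‖ ≤ ‖a + b‖ := by
  rw [← sq_le_sq₀ (norm_nonneg _) (norm_nonneg _), sq, sq,
    norm_add_sq_eq_norm_sq_add_norm_sq_real hab]
  exact le_add_of_nonneg_left (mul_self_nonneg _)

theorem dist_sub_le_infDist_of_sub_mem_orthogonal {E : Set H} {Q : AffineSubspace ℝ H} {x z : H}
    {η R : ℝ} (hxE : x ∈ E) (hxQ : x ∈ Q)
    (hEQ : ∀ e ∈ E, dist e x < R → infDist e (Q : Set H) ≤ η) (hz : z - x ∈ Q.directionᗮ)
    (hR : 2 * dist z x < R) : dist z x - η ≤ infDist z E := by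
  have hzQ : dist z x ≤ infDist z (Q : Set H) := by
    refine (le_infDist ⟨x, hxQ⟩).2 fun y hy => ?_
    have horth : inner ℝ (x - y) (z - x) = 0 :=
      Submodule.inner_right_of_mem_orthogonal (AffineSubspace.vsub_mem_direction hxQ hy) hz
    simpa only [dist_eq_norm, sub_add_sub_cancel'] using
      norm_le_norm_add_of_inner_eq_zero horth
  refine (le_infDist ⟨x, hxE⟩).2 fun e he => ?_
  rcases lt_or_ge (dist e x) R with hex | hex
  · linarith [infDist_le_infDist_add_dist (s := (Q : Set H)) (x := z) (y := e), hEQ e he hex]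
  · have hη : 0 ≤ η := infDist_nonneg.trans
      (hEQ x hxE (by rw [dist_self]; linarith [dist_nonneg (x := z) (y := x)]))
    linarith [dist_triangle_left e x z]

theorem inner_add_radialClip_pos {a b v : H} {r : ℝ} (hr : 0 < r) (hab : inner ℝ a b = 0)
    (hva : ‖v - a‖ ≤ r / 50) (hlower : r ≤ ‖a + b‖) (hupper : ‖a + b‖ ≤ 12 * r) :
    0 < inner ℝ (v + radialClip (r / 2) b) (a + b) := by
  have herror : -(6 / 25 * r ^ 2) ≤ inner ℝ (v - a) (a + b) := by
    have hcs : ‖v - a‖ * ‖a + b‖ ≤ r / 50 * (12 * r) := by gcongr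
    linarith [neg_le_of_abs_le (abs_real_inner_le_norm (v - a) (a + b))]
  have hclip : inner ℝ (a + radialClip (r / 2) b) (a + b)
      = ‖a‖ ^ 2 + min (r / 2) ‖b‖ * ‖b‖ := by
    have hba : inner ℝ (radialClip (r / 2) b) a = 0 := by
      rw [radialClip, real_inner_smul_left, real_inner_comm, hab, mul_zero]
    rw [inner_add_left, inner_add_right, inner_add_right, hab, hba,
      inner_radialClip_self (half_pos hr), real_inner_self_eq_norm_sq, add_zero, zero_add]
  have hpyth : r ^ 2 ≤ ‖a‖ ^ 2 + ‖b‖ ^ 2 := by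
    have hsq : r ^ 2 ≤ ‖a + b‖ ^ 2 := by gcongr
    linarith [norm_add_sq_eq_norm_sq_add_norm_sq_real hab]
  have hmain : r ^ 2 / 2 ≤ ‖a‖ ^ 2 + min (r / 2) ‖b‖ * ‖b‖ := by
    rcases le_total ‖b‖ (r / 2) with hb | hb
    · rw [min_eq_right hb]
      nlinarith [sq_nonneg r]
    rw [min_eq_left hb]
    rcases le_total ‖b‖ r with hbr | hrb
    · linarith [mul_le_mul_of_nonneg_right hbr (norm_nonneg b), sq_nonneg ‖a‖, sq ‖b‖]
    · linarith [mul_le_mul_of_nonneg_left hrb hr.le, sq_nonneg ‖a‖, sq r]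
  have hsplit : inner ℝ (v + radialClip (r / 2) b) (a + b)
      = inner ℝ (v - a) (a + b) + inner ℝ (a + radialClip (r / 2) b) (a + b) := by
    rw [← inner_add_left, ← add_assoc, sub_add_cancel]
  rw [hsplit, hclip]
  linarith [pow_pos hr 2]

variable [FiniteDimensional ℝ H] {x : H} {r : ℝ}

theorem notMem_ball_of_dist_add_starProjection_le {K : Submodule ℝ H} {u v : H}
    (hu : 12 * r ≤ ‖u‖) (hb : ‖Kᗮ.starProjection u‖ < r)
    (hv : dist v (x + K.starProjection u) ≤ r / 50) : v ∉ ball x (10 * r) := by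
  intro hvx
  have hdist : ‖K.starProjection u‖ ≤ dist v (x + K.starProjection u) + dist v x := by
    simpa only [dist_eq_norm, add_sub_cancel_left] using
      dist_triangle_left (x + K.starProjection u) x v
  have hsum : ‖u‖ ≤ ‖K.starProjection u‖ + ‖Kᗮ.starProjection u‖ := by
    simpa only [K.starProjection_add_starProjection_orthogonal] using
      norm_add_le (K.starProjection u) (Kᗮ.starProjection u)
  linarith [mem_ball.1 hvx, norm_nonneg (Kᗮ.starProjection u)]

theorem exists_homotopy_sub_eq_neg_radialClip {F : ℝ × H → H} {g : H → H} {τ : H → ℝ} (hr : 0 < r)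
    (K : Submodule ℝ H) (hF : ContinuousOn F (Icc (0 : ℝ) 1 ×ˢ univ)) (hF0 : ∀ z, F (0, z) = z)
    (hFout : ∀ t ∈ Icc (0 : ℝ) 1, ∀ z, z ∉ ball x (10 * r) → F (t, z) = z)
    (hg : ContinuousOn g (closedBall 0 (12 * r)))
    (hgK : ∀ u ∈ closedBall 0 (12 * r), dist (g u) (x + K.starProjection u) ≤ r / 50)
    (hτ : Continuous τ) (hτI : ∀ u, τ u ∈ Icc (0 : ℝ) 1)
    (hτ0 : ∀ u, r ≤ ‖Kᗮ.starProjection u‖ → τ u = 0) :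
    ∃ u ∈ closedBall 0 (12 * r), ‖Kᗮ.starProjection u‖ < r ∧
      F (τ u, g u) - x = -radialClip (r / 2) (Kᗮ.starProjection u) := by
  let f : H → H := fun u => F (τ u, g u) - x + radialClip (r / 2) (Kᗮ.starProjection u)
  have hf : ContinuousOn f (closedBall 0 (12 * r)) := by
    have hFg : ContinuousOn (fun u => F (τ u, g u)) (closedBall 0 (12 * r)) :=
      hF.comp (hτ.continuousOn.prodMk hg) fun u _ => ⟨hτI u, mem_univ _⟩
    exact (hFg.sub continuousOn_const).add
      ((continuous_radialClip (half_pos hr)).comp Kᗮ.starProjection.continuous).continuousOn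
  have hfixed : ∀ u ∈ closedBall 0 (12 * r), r ≤ ‖u‖ → F (τ u, g u) = g u →
      0 < inner ℝ (f u) u := by
    intro u hu hru hFu
    have hsum := K.starProjection_add_starProjection_orthogonal u
    have hinner := inner_add_radialClip_pos (v := g u - x) hr
      (Submodule.inner_right_of_mem_orthogonal (K.starProjection_apply_mem u)
        (Kᗮ.starProjection_apply_mem u))
      (by simpa only [dist_eq_norm, sub_sub] using hgK u hu) (by rwa [hsum])
      (by rw [hsum]; exact mem_closedBall_zero_iff.1 hu)
    simpa only [hsum, f, hFu] using hinner
  have hτfixed : ∀ u, r ≤ ‖Kᗮ.starProjection u‖ → F (τ u, g u) = g u := fun u hu => by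
    rw [hτ0 u hu, hF0]
  obtain ⟨u, hu, hfu⟩ := exists_mem_closedBall_eq_zero_of_inner_nonneg (by positivity) hf
    fun u hu => by
      have hu' : ‖u‖ = 12 * r := mem_sphere_zero_iff_norm.1 hu
      refine (hfixed u (sphere_subset_closedBall hu) (by linarith) ?_).le
      rcases le_or_gt r ‖Kᗮ.starProjection u‖ with hb | hb
      · exact hτfixed u hb
      · exact hFout _ (hτI u) _ (notMem_ball_of_dist_add_starProjection_le hu'.ge hb
          (hgK u (sphere_subset_closedBall hu)))
  refine ⟨u, hu, lt_of_not_ge fun hb => ?_, eq_neg_of_add_eq_zero_left hfu⟩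
  have hpos := hfixed u hu (hb.trans (Kᗮ.norm_starProjection_apply_le u)) (hτfixed u hb)
  rw [hfu, inner_zero_left] at hpos
  exact hpos.false

theorem exists_mem_closedBall_or_mem_sphere_of_homotopy {F : ℝ × H → H} {g : H → H} (hr : 0 < r)
    (K : Submodule ℝ H) (hF : ContinuousOn F (Icc (0 : ℝ) 1 ×ˢ univ)) (hF0 : ∀ z, F (0, z) = z)
    (hFout : ∀ t ∈ Icc (0 : ℝ) 1, ∀ z, z ∉ ball x (10 * r) → F (t, z) = z)
    (hg : ContinuousOn g (closedBall 0 (12 * r)))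
    (hgK : ∀ u ∈ closedBall 0 (12 * r), dist (g u) (x + K.starProjection u) ≤ r / 50) :
    ∃ u ∈ closedBall 0 (12 * r), F (1, g u) ∈ closedBall x (r / 2) ∨
      ∃ t ∈ Icc (0 : ℝ) 1, F (t, g u) ∈ {z | z - x ∈ Kᗮ} ∩ sphere x (r / 2) := by
  let τ : H → ℝ := fun u => Real.smoothTransition (2 - ‖Kᗮ.starProjection u‖ / (r / 2))
  have hτ : Continuous τ := Real.smoothTransition.continuous.comp (by fun_prop)
  have hτI : ∀ u, τ u ∈ Icc (0 : ℝ) 1 := fun u =>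
    ⟨Real.smoothTransition.nonneg _, Real.smoothTransition.le_one _⟩
  obtain ⟨u, hu, -, hFu⟩ := exists_homotopy_sub_eq_neg_radialClip hr K hF hF0 hFout hg hgK hτ hτI
    fun u hu => Real.smoothTransition.zero_of_nonpos (by
      rw [sub_nonpos, le_div_iff₀ (half_pos hr)]
      linarith)
  have hFx : dist (F (τ u, g u)) x = min (r / 2) ‖Kᗮ.starProjection u‖ := by
    rw [dist_eq_norm, hFu, norm_neg, norm_radialClip (half_pos hr)]
  refine ⟨u, hu, ?_⟩
  rcases le_or_gt ‖Kᗮ.starProjection u‖ (r / 2) with hb | hb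
  · have hτ1 : τ u = 1 := Real.smoothTransition.one_of_one_le (by
      linarith [(div_le_one (half_pos hr)).2 hb])
    rw [hτ1] at hFx
    exact Or.inl (mem_closedBall.2 (hFx.trans_le (min_le_left _ _)))
  · refine Or.inr ⟨τ u, hτI u, ?_, hFx.trans (min_eq_left hb.le)⟩
    rw [mem_ofPred_eq, hFu]
    exact neg_mem (Kᗮ.smul_mem _ (Kᗮ.starProjection_apply_mem u))

theorem not_exists_isUnlinking_of_approximation {E : Set H} (hr : 0 < r) (K : Submodule ℝ H)
    (hE : IsClosed E)
    (happrox : ∀ δ > 0, ∃ g : H → H, Continuous g ∧ ∀ u ∈ closedBall 0 (12 * r),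
      dist (g u) (x + K.starProjection u) ≤ r / 50 ∧ g u ∈ thickening δ E) :
    ¬ ∃ F, IsUnlinking (ball x (10 * r)) E ({z | z - x ∈ Kᗮ} ∩ sphere x (r / 2)) F := by
  rintro ⟨F, hF⟩
  have hS : IsClosed ({z | z - x ∈ Kᗮ} ∩ sphere x (r / 2)) :=
    (K.isClosed_orthogonal.preimage (continuous_sub_right x)).inter isClosed_sphere
  have hC : IsCompact (closedBall x (13 * r)) := isCompact_closedBall _ _
  obtain ⟨δ₁, hδ₁, havoid₁⟩ := exists_pos_forall_mem_thickening_notMem isCompact_Icc hC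
    (hF.continuousOn.mono (prod_mono_right (subset_univ _))) hS hE hF.map_notMem
  obtain ⟨δ₂, hδ₂, havoid₂⟩ := exists_pos_forall_mem_thickening_notMem (A := {(1 : ℝ)})
    (T := closedBall x (r / 2)) isCompact_singleton hC
    (hF.continuousOn.mono (prod_mono (by simp) (subset_univ _))) isClosed_closedBall hE
    fun z hz t ht hzx => hF.map_one_notMem z hz
      (closedBall_subset_ball (by linarith) (mem_singleton_iff.1 ht ▸ hzx))
  obtain ⟨g, hg, hgE⟩ := happrox (min δ₁ δ₂) (lt_min hδ₁ hδ₂)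
  obtain ⟨u, hu, hcross⟩ := exists_mem_closedBall_or_mem_sphere_of_homotopy hr K hF.continuousOn
    hF.map_zero hF.map_of_notMem hg.continuousOn fun u hu => (hgE u hu).1
  obtain ⟨hguK, hguE⟩ := hgE u hu
  have hguC : g u ∈ closedBall x (13 * r) := by
    have hK : dist (x + K.starProjection u) x ≤ 12 * r := by
      rw [dist_eq_norm, add_sub_cancel_left]
      exact (K.norm_starProjection_apply_le u).trans (mem_closedBall_zero_iff.1 hu)
    rw [mem_closedBall]
    linarith [dist_triangle (g u) (x + K.starProjection u) x]
  rcases hcross with hcross | ⟨t, ht, hcross⟩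
  · exact havoid₂ _ hguC (thickening_mono (min_le_right _ _) E hguE) 1 rfl hcross
  · exact havoid₁ _ hguC (thickening_mono (min_le_left _ _) E hguE) t ht hcross

theorem IsReifenbergFlat.exists_approximation_disk {d : ℕ} {ε δ : ℝ} {E : Set H}
    {Q : AffineSubspace ℝ H} (hE : IsReifenbergFlat d ε E) (hε : ε ≤ 1 / 100) (hr : 0 < r)
    (hr' : r ≤ 1 / 20) (hxE : x ∈ E) (hxQ : x ∈ Q)
    (hQE : ∀ y ∈ Q, dist y x < 20 * r → infDist y E < r / 200) (hδ : 0 < δ) :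
    ∃ g : H → H, Continuous g ∧ ∀ u ∈ closedBall 0 (12 * r),
      dist (g u) (x + Q.direction.starProjection u) ≤ r / 50 ∧ g u ∈ thickening δ E := by
  have h12 : 0 < 12 * r := by positivity
  let g₀ : C(H, H) := ⟨fun u => x + Q.direction.starProjection (radialClip (12 * r) u),
    continuous_const.add
      (Q.direction.starProjection.continuous.comp (continuous_radialClip h12))⟩
  have hg₀ : ∀ u, g₀ u ∈ thickening (r / 200) E := by
    intro u
    refine (mem_thickening_iff_infDist_lt ⟨x, hxE⟩).2 (hQE _ ?_ ?_)
    · rw [ContinuousMap.coe_mk, add_comm]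
      exact AffineSubspace.vadd_mem_of_mem_direction
        (Q.direction.starProjection_apply_mem _) hxQ
    · rw [ContinuousMap.coe_mk, dist_eq_norm, add_sub_cancel_left]
      linarith [Q.direction.norm_starProjection_apply_le (radialClip (12 * r) u),
        norm_radialClip_le h12 (z := u)]
  obtain ⟨g, hg⟩ := hE.exists_continuousMap_thickening hε (by positivity) (by linarith) g₀ hg₀ hδ
  refine ⟨g, g.continuous, fun u hu => ⟨?_, (hg u).2⟩⟩
  have hg₀u : g₀ u = x + Q.direction.starProjection u := by
    rw [ContinuousMap.coe_mk, radialClip_of_norm_le h12 (mem_closedBall_zero_iff.1 hu)]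
  rw [← hg₀u]
  linarith [(hg u).1]

theorem lem_15_6_general {d : ℕ} {ε : ℝ} {E : Set H} (hε : ε ≤ 1 / 10000) (hEc : IsClosed E)
    (hE : IsReifenbergFlat d ε E) (hx : x ∈ E) (hr : 0 < r) (hr' : r ≤ 1 / 20) :
    ∃ W : AffineSubspace ℝ H, x ∈ W ∧
      d + Module.finrank ℝ W.direction = Module.finrank ℝ H ∧
      (∀ z ∈ (W : Set H) ∩ sphere x (r / 2), r / 3 ≤ infDist z E) ∧
      ¬ ∃ F, IsUnlinking (ball x (10 * r)) E ((W : Set H) ∩ sphere x (r / 2)) F := by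
  obtain ⟨Q, rfl, hxQ, hQE, hEQ⟩ := hE x hx (20 * r) (by positivity) (by linarith)
  have hεr : ε * (20 * r) ≤ r / 500 := by nlinarith
  have hW : (AffineSubspace.mk' x Q.directionᗮ : Set H) = {z | z - x ∈ Q.directionᗮ} := by
    ext z
    simp [AffineSubspace.mem_mk']
  refine ⟨AffineSubspace.mk' x Q.directionᗮ, AffineSubspace.self_mem_mk' _ _, ?_, ?_, ?_⟩
  · rw [AffineSubspace.direction_mk', Q.direction.finrank_add_finrank_orthogonal]
  · rw [hW]
    rintro z ⟨hzW, hzx⟩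
    rw [mem_sphere] at hzx
    linarith [dist_sub_le_infDist_of_sub_mem_orthogonal hx hxQ hEQ hzW (by linarith)]
  · rw [hW]
    exact not_exists_isUnlinking_of_approximation hr Q.direction hEc fun δ hδ =>
      hE.exists_approximation_disk (by linarith) hr hr' hx hxQ
        (fun y hy hyx => (hQE y hy hyx).trans_lt (by linarith)) hδ

end Linking

/-- **Lemma 15.6**: a LARRF set is a local generalized Semmes surface: for
`x ∈ E` and `0 < r ≤ 10⁻²` there is an `(n−d)`-plane `W` through `x` such that
the sphere `S = W ∩ ∂B(x,r/2)` stays at distance `≥ r/3` from `E` and is linked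
with `E`: no continuous homotopy `F` on `[0,1] × ℝⁿ` can push `E` out of
`B(x,10r)` while fixing the points outside `B(x,10r)` and avoiding `S`. -/
theorem lem_15_6 (n d : ℕ) (hd : 0 < d) (hdn : d < n) :
    ∃ ε₀ : ℝ, 0 < ε₀ ∧
    ∀ C₀ : ℝ, 1 ≤ C₀ →
    ∀ ε : ℝ, 0 < ε → ε ≤ ε₀ →
    ∀ E : Set (V n), IsLARRF n d ε C₀ E →
    ∀ x ∈ E, ∀ r : ℝ, 0 < r → r ≤ (100 : ℝ)⁻¹ →
    ∃ W : Set (V n), IsAffinePlane n (n - d) W ∧ x ∈ W ∧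
      (∀ z ∈ W ∩ sphere x (r / 2), r / 3 ≤ infDist z E) ∧
      ¬ ∃ F : ℝ × V n → V n,
          ContinuousOn F (Set.Icc (0 : ℝ) 1 ×ˢ (Set.univ : Set (V n))) ∧
          (∀ z : V n, F (0, z) = z) ∧
          (∀ t ∈ Set.Icc (0 : ℝ) 1, ∀ z : V n, z ∉ ball x (10 * r) → F (t, z) = z) ∧
          (∀ z ∈ E, F (1, z) ∉ ball x (10 * r)) ∧
          (∀ z ∈ E, ∀ t ∈ Set.Icc (0 : ℝ) 1, F (t, z) ∉ W ∩ sphere x (r / 2)) := by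
  refine ⟨1 / 10000, by norm_num, fun C₀ _ ε _ hε E hE x hx r hr hr' => ?_⟩
  obtain ⟨W, hxW, hfinrank, hdist, hlink⟩ :=
    lem_15_6_general hε hE.2.1 hE.isReifenbergFlat hx hr (hr'.trans (by norm_num))
  rw [finrank_euclideanSpace_fin] at hfinrank
  exact ⟨W, ⟨W, rfl, by omega, x, hxW⟩, hxW, hdist,
    fun ⟨F, hF, h0, hout, h1, hS⟩ => hlink ⟨F, hF, h0, hout, h1, hS⟩⟩
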